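/- Let α, β be distinct elements of the algebraic closure of F_q(T), algebraic of degrees m and n and of inseparable degrees f and g respectively. Then |α − β| ≥ max(1, |α|) · max(1, |β|) · H(α)^{−n/(fg)} · H(β)^{−m/(fg)}. -/

import Mathlib

open Polynomial Filter
open scoped ENNReal

noncomputable section

namespace Ooto

variable (Fq : Type) [Field Fq] [Fintype Fq]

/-- `F_q((T⁻¹))`, realized as formal Laurent series in the variable `X = T⁻¹`. -/
abbrev K := LaurentSeries Fq

/-- The element `T = X⁻¹` of `F_q((T⁻¹))`. -/
def TT : K Fq := HahnSeries.single (-1 : ℤ) (1 : Fq)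

/-- The natural embedding of `F_q[T]` into `F_q((T⁻¹))`, sending `T` to `T`. -/
def polyToK : Polynomial Fq →+* K Fq := Polynomial.eval₂RingHom HahnSeries.C (TT Fq)

open Classical in
/-- The absolute value on `F_q((T⁻¹))`: `|0| = 0` and `|ξ| = q^{-N}` where `N` is the order
of `ξ` as a series in `T⁻¹`. -/
def kabs (f : K Fq) : ℝ := if f = 0 then 0 else (Fintype.card Fq : ℝ) ^ (-f.order)

/-- A fixed algebraic closure of `F_q((T⁻¹))`. -/
abbrev L := AlgebraicClosure (K Fq)

def toL : K Fq →+* L Fq := algebraMap (K Fq) (L Fq)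

def φ : Polynomial Fq →+* L Fq := (toL Fq).comp (polyToK Fq)

/-- Evaluation of `P ∈ (F_q[T])[X]` at `ξ ∈ F_q((T⁻¹))`. -/
def evalK (P : Polynomial (Polynomial Fq)) (ξ : K Fq) : K Fq :=
  Polynomial.eval₂ (polyToK Fq) ξ P

/-- Evaluation of `P ∈ (F_q[T])[X]` at a point of the algebraic closure. -/
def evalL (P : Polynomial (Polynomial Fq)) (α : L Fq) : L Fq :=
  Polynomial.eval₂ (φ Fq) α P

/-- Height of a polynomial over `F_q[T]`: the maximum of the absolute values of its
coefficients. -/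
def Hpoly (P : Polynomial (Polynomial Fq)) : ℝ := ⨆ i : ℕ, kabs Fq (polyToK Fq (P.coeff i))

/-- `P` is the minimal polynomial of `α`: a non-constant irreducible primitive polynomial in
`(F_q[T])[X]` whose leading coefficient is monic in `T`, vanishing at `α`. -/
def IsMinPolyOf (P : Polynomial (Polynomial Fq)) (α : L Fq) : Prop :=
  0 < P.natDegree ∧ Irreducible P ∧ P.IsPrimitive ∧ (P.leadingCoeff).Monic ∧ evalL Fq P α = 0

/-- `α` is algebraic over `F_q(T)`. -/
def IsAlgElem (α : L Fq) : Prop := ∃ P, IsMinPolyOf Fq P α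

open Classical in
/-- The minimal polynomial of an algebraic element (junk value `0` otherwise). -/
def minPolyPrim (α : L Fq) : Polynomial (Polynomial Fq) :=
  if h : IsAlgElem Fq α then h.choose else 0

/-- Degree of an algebraic element. -/
def degAlg (α : L Fq) : ℕ := (minPolyPrim Fq α).natDegree

/-- Height of an algebraic element. -/
def heightAlg (α : L Fq) : ℝ := Hpoly Fq (minPolyPrim Fq α)

/-- Inseparable degree of a polynomial `P ∈ (F_q[T])[X]`: the largest power `f = p^j` of the
characteristic such that `P(X) = R(X^f)` for some `R`. -/
def insepDeg (P : Polynomial (Polynomial Fq)) : ℕ :=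
  (ringChar Fq) ^ sSup {j : ℕ | ∃ R : Polynomial (Polynomial Fq),
    P = R.comp (Polynomial.X ^ (ringChar Fq) ^ j)}

/-- Inseparable degree of an algebraic element. -/
def insepAlg (α : L Fq) : ℕ := insepDeg Fq (minPolyPrim Fq α)

/-- `α'` is the Galois conjugate of the quadratic element `α` (equal to `α` itself in the
inseparable case): the minimal polynomial of `α` factors as `A(X - α)(X - α')`. -/
def IsConjOf (α' α : L Fq) : Prop :=
  (minPolyPrim Fq α).natDegree = 2 ∧
  (minPolyPrim Fq α).map (φ Fq) =
    Polynomial.C (φ Fq (minPolyPrim Fq α).leadingCoeff) *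
      (Polynomial.X - Polynomial.C α) * (Polynomial.X - Polynomial.C α')

/-- `v` is an absolute value on the algebraic closure of `F_q((T⁻¹))` extending `kabs`
(such an extension exists and is unique). -/
structure IsAbsExt (v : L Fq → ℝ) : Prop where
  eq_zero_iff : ∀ x, v x = 0 ↔ x = 0
  map_mul : ∀ x y, v (x * y) = v x * v y
  add_le : ∀ x y, v (x + y) ≤ max (v x) (v y)
  nonneg : ∀ x, 0 ≤ v x
  extends_kabs : ∀ f : K Fq, v (toL Fq f) = kabs Fq f

/-- The exponent `w_n(ξ)`: the supremum of the real numbers `w` such that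
`0 < |P(ξ)| ≤ H(P)^{-w}` for infinitely many `P ∈ (F_q[T])[X]` of degree at most `n`. -/
def wExp (n : ℕ) (ξ : K Fq) : EReal :=
  sSup {x : EReal | ∃ w : ℝ, x = (w : EReal) ∧
    {P : Polynomial (Polynomial Fq) | P.natDegree ≤ n ∧ 0 < kabs Fq (evalK Fq P ξ) ∧
      kabs Fq (evalK Fq P ξ) ≤ Hpoly Fq P ^ (-w)}.Infinite}

/-- The exponent `w_n^*(ξ)`: the supremum of the real numbers `w` such that
`0 < |ξ - α| ≤ H(α)^{-w-1}` for infinitely many algebraic `α` of degree at most `n`. -/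
def wStarExp (v : L Fq → ℝ) (n : ℕ) (ξ : K Fq) : EReal :=
  sSup {x : EReal | ∃ w : ℝ, x = (w : EReal) ∧
    {α : L Fq | IsAlgElem Fq α ∧ degAlg Fq α ≤ n ∧ 0 < v (toL Fq ξ - α) ∧
      v (toL Fq ξ - α) ≤ heightAlg Fq α ^ (-w - 1)}.Infinite}

/-- `pSeq a n = p_{n-1}`, the numerators of the convergents of `[a 0; a 1, a 2, …]`
(with `p_{-1} = 1`). -/
def pSeq (a : ℕ → Polynomial Fq) : ℕ → Polynomial Fq
  | 0 => 1
  | 1 => a 0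
  | (n+2) => a (n+1) * pSeq a (n+1) + pSeq a n

/-- `qSeq a n = q_{n-1}`, the denominators of the convergents of `[a 0; a 1, a 2, …]`
(with `q_{-1} = 0`). -/
def qSeq (a : ℕ → Polynomial Fq) : ℕ → Polynomial Fq
  | 0 => 0
  | 1 => 1
  | (n+2) => a (n+1) * qSeq a (n+1) + qSeq a n

/-- `ξ` has continued fraction expansion `[a 0; a 1, a 2, …]`: each partial quotient `a n`
(`n ≥ 1`) has degree at least one and `|ξ - p_n/q_n| = |q_n|⁻¹|q_{n+1}|⁻¹` for all `n ≥ 0`. -/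
def IsCFOf (ξ : K Fq) (a : ℕ → Polynomial Fq) : Prop :=
  (∀ n, 1 ≤ n → 1 ≤ (a n).natDegree) ∧
  ∀ n : ℕ,
    kabs Fq (ξ - polyToK Fq (pSeq Fq a (n+1)) / polyToK Fq (qSeq Fq a (n+1))) =
      (kabs Fq (polyToK Fq (qSeq Fq a (n+1))) * kabs Fq (polyToK Fq (qSeq Fq a (n+2))))⁻¹

/-- The sequence of partial quotients of `[0; b 0, b 1, b 2, …]`. -/
def cfA (b : ℕ → Polynomial Fq) : ℕ → Polynomial Fq := fun n => if n = 0 then 0 else b (n - 1)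

/-- `qden b n` is the denominator `q_n` of the `n`-th convergent of `[0; b 0, b 1, …]`. -/
def qden (b : ℕ → Polynomial Fq) (n : ℕ) : Polynomial Fq := qSeq Fq (cfA Fq b) (n + 1)

/-- `V^w` for a finite word `V` and a real `w ≥ 0`: `⌊w⌋` copies of `V` followed by the prefix
of `V` of length `⌈(w - ⌊w⌋)|V|⌉`. -/
def wordPow {A : Type*} (V : List A) (w : ℝ) : List A :=
  (List.replicate ⌊w⌋₊ V).flatten ++ V.take ⌈(w - ⌊w⌋₊) * V.length⌉₊

/-- The finite word `l` is a prefix of the infinite word `b`. -/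
def IsPrefixOfSeq {A : Type*} (l : List A) (b : ℕ → A) : Prop :=
  ∀ (i : ℕ) (h : i < l.length), l.get ⟨i, h⟩ = b i

/-- Condition `(*)_ρ` for an infinite word. -/
def SatisfiesCond {A : Type*} (b : ℕ → A) (ρ : ℝ) : Prop :=
  ∃ (U V : ℕ → List A) (w : ℕ → ℝ),
    (∀ n, V n ≠ []) ∧ (∀ n, 0 ≤ w n) ∧
    (∀ n, IsPrefixOfSeq (U n ++ wordPow (V n) (w n)) b) ∧
    (∀ n, ρ * (((U n).length + (V n).length : ℕ) : ℝ) ≤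
      (((U n).length + (wordPow (V n) (w n)).length : ℕ) : ℝ)) ∧
    StrictMono fun n => (wordPow (V n) (w n)).length

/-- The Diophantine exponent of an infinite word: the supremum of the `ρ` such that the word
satisfies Condition `(*)_ρ`. -/
def dioExp {A : Type*} (b : ℕ → A) : EReal :=
  sSup {x : EReal | ∃ ρ : ℝ, x = (ρ : EReal) ∧ SatisfiesCond b ρ}

/-- The complexity function: the number of distinct blocks of `n` consecutive letters. -/
def complexity {A : Type*} (b : ℕ → A) (n : ℕ) : ℕ∞ :=
  {w : Fin n → A | ∃ i : ℕ, ∀ k : Fin n, w k = b (i + k)}.encard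

/-- The infinite word `b` is ultimately periodic. -/
def UltimatelyPeriodic {A : Type*} (b : ℕ → A) : Prop :=
  ∃ N T : ℕ, 0 < T ∧ ∀ n, N ≤ n → b (n + T) = b n


section General

variable {F : Type*} [Field F] (w : AbsoluteValue F ℝ) (hna : IsNonarchimedean w)

lemma gauss_X_sub_C (a : F) : (X - C a).gaussNorm w 1 = max 1 (w a) := by
  apply le_antisymm
  · obtain ⟨i, hi⟩ := exists_eq_gaussNorm w 1 (X - C a)
    rw [hi, one_pow, mul_one]
    rcases i with _ | _ | i
    · simp
    · simp [coeff_X, coeff_C]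
    · simp [coeff_X, coeff_C]
  · apply max_le
    · have h := le_gaussNorm w (X - C a) zero_le_one 1
      have h1 : (X - C a).coeff 1 = 1 := by simp [coeff_X, coeff_C]
      rwa [h1, map_one, one_pow, mul_one] at h
    · have h := le_gaussNorm w (X - C a) zero_le_one 0
      have h1 : (X - C a).coeff 0 = -a := by simp
      rwa [h1, w.map_neg, pow_zero, mul_one] at h

include hna in
lemma gauss_multiset_prod (s : Multiset F) :
    ((s.map fun a => X - C a).prod).gaussNorm w 1 = (s.map fun a => max 1 (w a)).prod := by
  induction s using Multiset.induction_on with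
  | empty =>
    simp only [Multiset.map_zero, Multiset.prod_zero]
    rw [← C_1, gaussNorm_C, map_one]
  | cons a s ih =>
    simp only [Multiset.map_cons, Multiset.prod_cons]
    rw [gaussNorm_mul hna one_pos, ih, gauss_X_sub_C]

include hna in
lemma gauss_splits (A : F[X]) (hA : A.Splits) :
    A.gaussNorm w 1 = w A.leadingCoeff * (A.roots.map fun a => max 1 (w a)).prod := by
  conv_lhs => rw [hA.eq_prod_roots]
  rw [gaussNorm_mul hna one_pos, gaussNorm_C, gauss_multiset_prod w hna]

include hna in
lemma gauss_pow_X_sub_C (a : F) (k : ℕ) :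
    ((X - C a) ^ k).gaussNorm w 1 = max 1 (w a) ^ k := by
  induction k with
  | zero => rw [pow_zero, pow_zero, ← C_1, gaussNorm_C, map_one]
  | succ k ih => rw [pow_succ, pow_succ, gaussNorm_mul hna one_pos, ih, gauss_X_sub_C]

include hna in
lemma eval_bound (B : F[X]) (n : ℕ) (hn : B.natDegree ≤ n) (x : F) :
    w (B.eval x) ≤ B.gaussNorm w 1 * max 1 (w x) ^ n := by
  have h1 : (1 : ℝ) ≤ max 1 (w x) := le_max_left _ _
  have hG : 0 ≤ B.gaussNorm w 1 := gaussNorm_nonneg w B zero_le_one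
  rw [eval_eq_sum_range]
  obtain ⟨i, hi, hle⟩ := IsNonarchimedean.finset_image_add_of_nonempty hna
    (fun i => B.coeff i * x ^ i) (t := Finset.range (B.natDegree + 1)) ⟨0, by simp⟩
  refine hle.trans ?_
  rw [map_mul, map_pow]
  have h2 : w (B.coeff i) ≤ B.gaussNorm w 1 := by
    simpa using le_gaussNorm w B zero_le_one i
  have hi' : i ≤ n := by have := Finset.mem_range.1 hi; omega
  have h3 : w x ^ i ≤ max 1 (w x) ^ n :=
    (pow_le_pow_left₀ (w.nonneg x) (le_max_right _ _) i).trans (pow_le_pow_right₀ h1 hi')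
  exact mul_le_mul h2 h3 (pow_nonneg (w.nonneg x) _) hG

lemma prod_aux [DecidableEq F] (s : Multiset F) (M : F → ℝ) (c r : ℝ) (n : ℕ) (α : F) :
    (s.map fun x => c * M x ^ n * (if x = α then r else 1)).prod =
      c ^ s.card * (s.map M).prod ^ n * r ^ s.count α := by
  induction s using Multiset.induction_on with
  | empty => simp
  | cons a s ih =>
    simp only [Multiset.map_cons, Multiset.prod_cons, ih, Multiset.card_cons, Multiset.count_cons]
    by_cases h : a = α
    · subst h; simp; ring
    · rw [if_neg h, if_neg (Ne.symm h)]; ring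

lemma prod_le_aux (s : Multiset F) (f g : F → ℝ) (hf : ∀ x ∈ s, 0 ≤ f x)
    (h : ∀ x ∈ s, f x ≤ g x) : (s.map f).prod ≤ (s.map g).prod := by
  induction s using Multiset.induction_on with
  | empty => simp
  | cons a s ih =>
    simp only [Multiset.map_cons, Multiset.prod_cons]
    have ha : a ∈ a ::ₘ s := Multiset.mem_cons_self a s
    refine mul_le_mul (h a ha) (ih (fun x hx => hf x (Multiset.mem_cons_of_mem hx))
      (fun x hx => h x (Multiset.mem_cons_of_mem hx))) ?_ ((hf a ha).trans (h a ha))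
    apply Multiset.prod_nonneg
    intro y hy
    obtain ⟨x, hx, rfl⟩ := Multiset.mem_map.1 hy
    exact hf x (Multiset.mem_cons_of_mem hx)

include hna in
/-- Basic upper bound for a resultant. -/
lemma resultant_bound (A B : F[X]) (hA : A.Splits) (hA0 : A ≠ 0) (n : ℕ) (hB : B.natDegree ≤ n)
    (c r : ℝ) (hc : 0 ≤ c) (hr : 0 ≤ r) (hr1 : r ≤ 1) (α : F)
    (h1 : ∀ x, w (B.eval x) ≤ c * max 1 (w x) ^ n)
    (h2 : w (B.eval α) ≤ c * max 1 (w α) ^ n * r)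
    (k : ℕ) (hk : (X - C α) ^ k ∣ A) :
    w (resultant A B A.natDegree n) ≤ c ^ A.natDegree * A.gaussNorm w 1 ^ n * r ^ k := by
  classical
  rw [resultant_eq_prod_eval A B n hB hA, map_mul, map_pow, map_multiset_prod, Multiset.map_map]
  have h3 : (A.roots.map (w ∘ fun x => B.eval x)).prod ≤
      (A.roots.map fun x => c * max 1 (w x) ^ n * (if x = α then r else 1)).prod := by
    apply prod_le_aux
    · intro x _; exact w.nonneg _
    · intro x _
      by_cases h : x = α
      · subst h; simpa using h2
      · simpa [h] using h1 x
  rw [prod_aux] at h3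
  have hcount : k ≤ A.roots.count α := by
    rw [count_roots]
    exact (le_rootMultiplicity_iff hA0).2 hk
  have h4 : r ^ A.roots.count α ≤ r ^ k := pow_le_pow_of_le_one hr hr1 hcount
  rw [← hA.natDegree_eq_card_roots] at h3
  rw [gauss_splits w hna A hA]
  have hP : 0 ≤ (A.roots.map fun x => max 1 (w x)).prod := by
    apply Multiset.prod_nonneg
    intro y hy
    obtain ⟨x, hx, rfl⟩ := Multiset.mem_map.1 hy
    exact zero_le_one.trans (le_max_left _ _)
  calc _ ≤ w A.leadingCoeff ^ n * (c ^ A.natDegree *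
        (A.roots.map fun x => max 1 (w x)).prod ^ n * r ^ A.roots.count α) := by
        gcongr
    _ ≤ w A.leadingCoeff ^ n * (c ^ A.natDegree *
        (A.roots.map fun x => max 1 (w x)).prod ^ n * r ^ k) := by gcongr
    _ = _ := by rw [mul_pow]; ring

/-- the normalized distance -/
def rho (α β : F) : ℝ := w (α - β) / (max 1 (w α) * max 1 (w β))

lemma max_pos' (α : F) : 0 < max 1 (w α) := lt_of_lt_of_le one_pos (le_max_left _ _)

lemma rho_nonneg (α β : F) : 0 ≤ rho w α β :=
  div_nonneg (w.nonneg _) (mul_pos (max_pos' w α) (max_pos' w β)).le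

include hna in
lemma rho_le_one (α β : F) : rho w α β ≤ 1 := by
  rw [rho, div_le_one (mul_pos (max_pos' w α) (max_pos' w β))]
  have h : w (α - β) ≤ max (w α) (w β) := by
    have := hna α (-β)
    rwa [← sub_eq_add_neg, w.map_neg] at this
  have ha : 1 ≤ max 1 (w α) := le_max_left _ _
  have hb : 1 ≤ max 1 (w β) := le_max_left _ _
  have ha' : w α ≤ max 1 (w α) := le_max_right _ _
  have hb' : w β ≤ max 1 (w β) := le_max_right _ _
  rcases le_max_iff.1 h with h | h <;> nlinarith

lemma rho_mul (α β : F) : w (α - β) = rho w α β * (max 1 (w α) * max 1 (w β)) := by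
  rw [rho, div_mul_cancel₀]
  exact (mul_pos (max_pos' w α) (max_pos' w β)).ne'

include hna in
/-- evaluation at `α` of a polynomial divisible by `(X-β)^g`. -/
lemma eval_bound_rho (B : F[X]) (hB0 : B ≠ 0) (α β : F) (g : ℕ) (hg : (X - C β) ^ g ∣ B) :
    w (B.eval α) ≤ B.gaussNorm w 1 * max 1 (w α) ^ B.natDegree * rho w α β ^ g := by
  obtain ⟨S, rfl⟩ := hg
  have hS : S ≠ 0 := right_ne_zero_of_mul hB0
  have hd : ((X - C β) ^ g * S).natDegree = g + S.natDegree := by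
    rw [natDegree_mul (pow_ne_zero _ (X_sub_C_ne_zero β)) hS, natDegree_pow, natDegree_X_sub_C,
      mul_one]
  rw [hd, gaussNorm_mul hna one_pos, gauss_pow_X_sub_C w hna]
  simp only [eval_mul, eval_pow, eval_sub, eval_X, eval_C, map_mul, map_pow]
  rw [rho_mul]
  have := eval_bound w hna S _ le_rfl α
  have h0 := rho_nonneg w α β
  have h1 := max_pos' w α
  have h2 := max_pos' w β
  calc _ ≤ (rho w α β * (max 1 (w α) * max 1 (w β))) ^ g *
        (S.gaussNorm w 1 * max 1 (w α) ^ S.natDegree) := by gcongr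
    _ = _ := by rw [mul_pow, mul_pow, pow_add]; ring

include hna in
/-- Case of two polynomials -/
lemma case_one (A B : F[X]) (hA : A.Splits) (hA0 : A ≠ 0) (hB0 : B ≠ 0) (α β : F) (f g : ℕ)
    (hf : (X - C α) ^ f ∣ A) (hg : (X - C β) ^ g ∣ B) :
    w (resultant A B A.natDegree B.natDegree) ≤
      B.gaussNorm w 1 ^ A.natDegree * A.gaussNorm w 1 ^ B.natDegree * rho w α β ^ (f * g) := by
  rw [mul_comm f g, pow_mul]
  exact resultant_bound w hna A B hA hA0 _ le_rfl _ _ (gaussNorm_nonneg w B zero_le_one)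
    (pow_nonneg (rho_nonneg w α β) _) (pow_le_one₀ (rho_nonneg w α β) (rho_le_one w hna α β)) α
    (eval_bound w hna B _ le_rfl) (eval_bound_rho w hna B hB0 α β g hg) f hf

include hna in
lemma natCast_le_one (n : ℕ) : w (n : F) ≤ 1 := by
  induction n with
  | zero => simp
  | succ n ih =>
    rw [Nat.cast_succ]
    refine (hna _ _).trans (max_le ih ?_)
    simp

include hna in
lemma gauss_derivative_le (A : F[X]) : (derivative A).gaussNorm w 1 ≤ A.gaussNorm w 1 := by
  obtain ⟨i, hi⟩ := exists_eq_gaussNorm w 1 (derivative A)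
  rw [hi, coeff_derivative, map_mul, one_pow, mul_one]
  have h1 : w ((i : F) + 1) ≤ 1 := by simpa using natCast_le_one w hna (i + 1)
  have h2 : w (A.coeff (i + 1)) ≤ A.gaussNorm w 1 := by
    simpa using le_gaussNorm w A zero_le_one (i + 1)
  calc _ ≤ w (A.coeff (i + 1)) * 1 := by gcongr
    _ ≤ _ := by simpa using h2

include hna in
/-- Case of one polynomial -/
lemma case_two (A : F[X]) (hA : A.Splits) (hA0 : A ≠ 0) (α β : F) (hne : α ≠ β)
    (hα : A.eval α = 0) (hβ : A.eval β = 0) :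
    w (resultant A (derivative A) A.natDegree (A.natDegree - 1)) ≤
      A.gaussNorm w 1 ^ A.natDegree * A.gaussNorm w 1 ^ (A.natDegree - 1) * rho w α β := by
  obtain ⟨S, hS⟩ := dvd_iff_isRoot.2 hα
  have hSβ : S.eval β = 0 := by
    rw [hS] at hβ
    simp only [eval_mul, eval_sub, eval_X, eval_C] at hβ
    exact (mul_eq_zero.1 hβ).resolve_left (sub_ne_zero.2 hne.symm)
  have hS0 : S ≠ 0 := by rintro rfl; simp at hS; exact hA0 hS
  have hd : A.natDegree - 1 = S.natDegree := by
    rw [hS, natDegree_mul (X_sub_C_ne_zero α) hS0, natDegree_X_sub_C]; omega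
  have hev : (derivative A).eval α = S.eval α := by
    rw [hS]; simp [derivative_mul]
  have hSG : S.gaussNorm w 1 ≤ A.gaussNorm w 1 := by
    have h0 := gaussNorm_nonneg w S zero_le_one
    rw [hS, gaussNorm_mul hna one_pos, gauss_X_sub_C]
    have h1 : 1 ≤ max 1 (w α) := le_max_left _ _
    nlinarith
  have hG0 := gaussNorm_nonneg w A zero_le_one
  have h := resultant_bound w hna A (derivative A) hA hA0 (A.natDegree - 1)
    (natDegree_derivative_le A) (A.gaussNorm w 1) (rho w α β) hG0 (rho_nonneg w α β)
    (rho_le_one w hna α β) α ?_ ?_ 1 (by rw [pow_one]; exact dvd_iff_isRoot.2 hα)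
  · simpa using h
  · intro x
    refine (eval_bound w hna _ _ (natDegree_derivative_le A) x).trans ?_
    have := gauss_derivative_le w hna A
    have := max_pos' w x
    gcongr
  · rw [hev, hd]
    have := eval_bound_rho w hna S hS0 α β 1 (by rw [pow_one]; exact dvd_iff_isRoot.2 hSβ)
    rw [pow_one] at this
    refine this.trans ?_
    have := max_pos' w α
    have := rho_nonneg w α β
    gcongr

/-- final real manipulation -/
lemma final_real (A B Ma Mb d : ℝ) (hA : 0 < A) (hB : 0 < B) (hMa : 0 < Ma) (hMb : 0 < Mb)
    (hd : 0 ≤ d) (n m f g : ℕ) (hf : 0 < f) (hg : 0 < g)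
    (h : 1 ≤ A ^ n * B ^ m * (d / (Ma * Mb)) ^ (f * g)) :
    Ma * Mb * A ^ (-(n : ℝ) / ((f : ℝ) * (g : ℝ))) * B ^ (-(m : ℝ) / ((f : ℝ) * (g : ℝ))) ≤ d := by
  have hk : f * g ≠ 0 := (Nat.mul_pos hf hg).ne'
  have hk' : ((f : ℝ) * g) ≠ 0 := by exact_mod_cast hk
  have key : ∀ (x : ℝ) (l : ℕ), 0 < x → (x ^ (-(l : ℝ) / ((f : ℝ) * g))) ^ (f * g) = (x ^ l)⁻¹ := by
    intro x l hx
    rw [← Real.rpow_natCast, ← Real.rpow_mul hx.le]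
    push_cast
    rw [div_mul_cancel₀ _ hk', Real.rpow_neg hx.le, Real.rpow_natCast]
  refine le_of_pow_le_pow_left₀ hk hd ?_
  rw [mul_pow, mul_pow, key A n hA, key B m hB]
  rw [div_pow] at h
  have hM : 0 < (Ma * Mb) ^ (f * g) := by positivity
  rw [← mul_div_assoc, le_div_iff₀ hM, one_mul] at h
  calc _ ≤ (A ^ n * B ^ m * d ^ (f * g)) * (A ^ n)⁻¹ * (B ^ m)⁻¹ := by gcongr
    _ = _ := by field_simp

end General

section Specific

/-- the absolute value, bundled -/
def absOf {v : L Fq → ℝ} (hv : IsAbsExt Fq v) : AbsoluteValue (L Fq) ℝ where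
  toFun := v
  map_mul' := hv.map_mul
  nonneg' := hv.nonneg
  eq_zero' := hv.eq_zero_iff
  add_le' x y := (hv.add_le x y).trans
    (max_le (le_add_of_nonneg_right (hv.nonneg y)) (le_add_of_nonneg_left (hv.nonneg x)))

lemma coeff_polyToK (a : Polynomial Fq) (n : ℕ) :
    (polyToK Fq a).coeff (-(n : ℤ)) = a.coeff n := by
  have hT : ∀ i : ℕ, (TT Fq) ^ i = HahnSeries.single (-(i : ℤ)) (1 : Fq) := by
    intro i
    rw [TT, HahnSeries.single_pow]
    simp
  induction a using Polynomial.induction_on' with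
  | add p q hp hq => simp [hp, hq]
  | monomial i c =>
    simp only [polyToK, coe_eval₂RingHom, eval₂_monomial, hT]
    rw [coeff_monomial, HahnSeries.C_apply, HahnSeries.single_mul_single, HahnSeries.coeff_single]
    simp [eq_comm]

lemma polyToK_ne_zero {a : Polynomial Fq} (ha : a ≠ 0) : polyToK Fq a ≠ 0 := by
  intro h
  have := coeff_polyToK Fq a a.natDegree
  rw [h] at this
  simp at this
  exact ha (leadingCoeff_eq_zero.1 this.symm)

lemma one_le_kabs {a : Polynomial Fq} (ha : a ≠ 0) : 1 ≤ kabs Fq (polyToK Fq a) := by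
  rw [kabs, if_neg (polyToK_ne_zero Fq ha)]
  have h1 : (polyToK Fq a).order ≤ -(a.natDegree : ℤ) := by
    apply HahnSeries.order_le_of_coeff_ne_zero
    rw [coeff_polyToK]
    simpa using ha
  apply one_le_zpow₀
  · exact_mod_cast Fintype.card_pos
  · omega

lemma φ_injective : Function.Injective (φ Fq) := by
  rw [injective_iff_map_eq_zero]
  intro a ha
  by_contra h
  refine polyToK_ne_zero Fq h ?_
  have : toL Fq (polyToK Fq a) = 0 := ha
  simpa [toL] using this

lemma one_le_v {v : L Fq → ℝ} (hv : IsAbsExt Fq v) {a : Polynomial Fq} (ha : a ≠ 0) :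
    1 ≤ v (φ Fq a) := by
  have : v (φ Fq a) = kabs Fq (polyToK Fq a) := hv.extends_kabs _
  rw [this]
  exact one_le_kabs Fq ha

lemma coeff_le_Hpoly {v : L Fq → ℝ} (hv : IsAbsExt Fq v) (P : Polynomial (Polynomial Fq))
    (i : ℕ) : v (φ Fq (P.coeff i)) ≤ Hpoly Fq P := by
  have : v (φ Fq (P.coeff i)) = kabs Fq (polyToK Fq (P.coeff i)) := hv.extends_kabs _
  rw [this, Hpoly]
  refine le_ciSup (f := fun i : ℕ => kabs Fq (polyToK Fq (P.coeff i))) ?_ i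
  apply Set.Finite.bddAbove
  refine Set.Finite.subset (s := insert 0
    ((fun i : ℕ => kabs Fq (polyToK Fq (P.coeff i))) '' (Finset.range (P.natDegree + 1)))) ?_ ?_
  · exact ((Finset.finite_toSet _).image _).insert _
  · rintro _ ⟨j, rfl⟩
    by_cases hj : j ≤ P.natDegree
    · right
      exact ⟨j, by simpa [Nat.lt_succ_iff] using hj, rfl⟩
    · left
      simp only
      rw [coeff_eq_zero_of_natDegree_lt (by omega)]
      simp [kabs]

/-- the map from the fraction field -/
def ψ : FractionRing (Polynomial Fq) →+* L Fq := IsFractionRing.lift (φ_injective Fq)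

lemma map_ψ (P : Polynomial (Polynomial Fq)) :
    (P.map (algebraMap _ (FractionRing (Polynomial Fq)))).map (ψ Fq) = P.map (φ Fq) := by
  rw [Polynomial.map_map]
  congr 1
  ext x
  · simp [ψ, IsFractionRing.lift_algebraMap]
  · simp [ψ, IsFractionRing.lift_algebraMap]

lemma no_common {U V : Polynomial (FractionRing (Polynomial Fq))} (h : IsCoprime U V) (x : L Fq)
    (hU : (U.map (ψ Fq)).eval x = 0) (hV : (V.map (ψ Fq)).eval x = 0) : False := by
  obtain ⟨a, b, hab⟩ := h
  have := congrArg (fun W => (W.map (ψ Fq)).eval x) hab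
  simp [hU, hV] at this

lemma eq_of_common_root {P Q : Polynomial (Polynomial Fq)} {α β x : L Fq}
    (hP : IsMinPolyOf Fq P α) (hQ : IsMinPolyOf Fq Q β)
    (h1 : (P.map (φ Fq)).eval x = 0) (h2 : (Q.map (φ Fq)).eval x = 0) : P = Q := by
  obtain ⟨_, hPi, hPp, hPm, _⟩ := hP
  obtain ⟨_, hQi, hQp, hQm, _⟩ := hQ
  have hPi' := (hPp.irreducible_iff_irreducible_map_fraction_map
    (K := FractionRing (Polynomial Fq))).1 hPi
  rcases (em (P.map (algebraMap _ (FractionRing (Polynomial Fq))) ∣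
    Q.map (algebraMap _ (FractionRing (Polynomial Fq))))).symm with h | h
  · exact (no_common Fq (hPi'.coprime_iff_not_dvd.2 h) x (by rwa [map_ψ]) (by rwa [map_ψ])).elim
  · have hd := hPp.dvd_of_fraction_map_dvd_fraction_map h
    have := hPi.associated_of_dvd hQi hd
    obtain ⟨u, hu⟩ := this
    obtain ⟨c, hc, hcu⟩ := Polynomial.isUnit_iff.1 u.isUnit
    obtain ⟨e, he, hec⟩ := Polynomial.isUnit_iff.1 hc
    rw [← hcu, ← hec] at hu
    have h3 := congrArg (fun W => W.leadingCoeff.leadingCoeff) hu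
    simp only [leadingCoeff_mul, leadingCoeff_C] at h3
    rw [hPm.leadingCoeff, hQm.leadingCoeff, one_mul] at h3
    rw [h3] at hu
    simpa using hu

lemma resultant_ne (A B : Polynomial (L Fq)) (hA0 : A ≠ 0) (n : ℕ) (hB : B.natDegree ≤ n)
    (h : ∀ x, A.eval x = 0 → B.eval x = 0 → False) : resultant A B A.natDegree n ≠ 0 := by
  rw [resultant_eq_prod_eval A B n hB (IsAlgClosed.splits A)]
  refine mul_ne_zero (pow_ne_zero _ (leadingCoeff_ne_zero.2 hA0)) ?_
  intro h0
  rw [Multiset.prod_eq_zero_iff] at h0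
  obtain ⟨x, hx, hx0⟩ := Multiset.mem_map.1 h0
  exact h x (mem_roots hA0 |>.1 hx) hx0

lemma exists_insep (P : Polynomial (Polynomial Fq)) (hP : 0 < P.natDegree) :
    ∃ (j : ℕ) (R : Polynomial (Polynomial Fq)), insepDeg Fq P = ringChar Fq ^ j ∧
      P = expand _ (ringChar Fq ^ j) R ∧ derivative R ≠ 0 := by
  have hp : (ringChar Fq).Prime := CharP.char_is_prime Fq _
  set S := {j : ℕ | ∃ R : Polynomial (Polynomial Fq),
    P = R.comp (Polynomial.X ^ (ringChar Fq) ^ j)} with hS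
  have hb : BddAbove S := by
    refine ⟨P.natDegree, ?_⟩
    rintro j ⟨R, hR⟩
    rw [← expand_eq_comp_X_pow] at hR
    have h1 : P.natDegree = R.natDegree * ringChar Fq ^ j := by
      conv_lhs => rw [hR]
      rw [natDegree_expand]
    have h2 : j < ringChar Fq ^ j := Nat.lt_pow_self hp.one_lt
    have h3 : 0 < R.natDegree := by
      rcases Nat.eq_zero_or_pos R.natDegree with h | h
      · rw [h] at h1; omega
      · exact h
    nlinarith
  have hn : S.Nonempty := ⟨0, P, by simp⟩
  obtain ⟨R, hR⟩ := Nat.sSup_mem hn hb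
  refine ⟨sSup S, R, rfl, hR, ?_⟩
  intro hd
  have hc : CharP (Polynomial Fq) (ringChar Fq) := inferInstance
  have h2 := expand_contract (ringChar Fq) hd hp.ne_zero
  have h3 : sSup S + 1 ∈ S := by
    refine ⟨contract (ringChar Fq) R, ?_⟩
    rw [← expand_eq_comp_X_pow, pow_succ, ← expand_expand, h2]
    exact hR
  have := le_csSup hb h3
  omega

instance charP_L : CharP (L Fq) (ringChar Fq) :=
  charP_of_injective_ringHom (f := (φ Fq).comp C)
    ((φ_injective Fq).comp (C_injective)) (ringChar Fq)

lemma minPoly_spec {α : L Fq} (hα : IsAlgElem Fq α) : IsMinPolyOf Fq (minPolyPrim Fq α) α := by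
  rw [minPolyPrim, dif_pos hα]
  exact hα.choose_spec

lemma pow_dvd_of_expand (R : Polynomial (Polynomial Fq)) (j : ℕ) (α : L Fq)
    (h : (R.map (φ Fq)).eval (α ^ ringChar Fq ^ j) = 0) :
    (X - C α) ^ ringChar Fq ^ j ∣ (expand _ (ringChar Fq ^ j) R).map (φ Fq) := by
  have hp : (ringChar Fq).Prime := CharP.char_is_prime Fq _
  haveI : Fact (ringChar Fq).Prime := ⟨hp⟩
  obtain ⟨S, hS⟩ := dvd_iff_isRoot.2 h
  rw [map_expand, hS, map_mul]
  refine Dvd.dvd.mul_right ?_ _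
  rw [map_sub, expand_X, expand_C, C_pow, ← sub_pow_char_pow]

lemma eval_expand_map (R : Polynomial (Polynomial Fq)) (f : ℕ) (α : L Fq) :
    ((expand _ f R).map (φ Fq)).eval α = (R.map (φ Fq)).eval (α ^ f) := by
  rw [map_expand, expand_eval]

lemma gauss_le_Hpoly {v : L Fq → ℝ} (hv : IsAbsExt Fq v) (R : Polynomial (Polynomial Fq))
    (f : ℕ) (hf : 0 < f) :
    (R.map (φ Fq)).gaussNorm (absOf Fq hv) 1 ≤ Hpoly Fq (expand _ f R) := by
  obtain ⟨i, hi⟩ := exists_eq_gaussNorm (absOf Fq hv) 1 (R.map (φ Fq))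
  rw [hi, one_pow, mul_one, coeff_map]
  have := coeff_le_Hpoly Fq hv (expand _ f R) (i * f)
  rwa [coeff_expand_mul hf] at this

lemma one_le_Hpoly {v : L Fq → ℝ} (hv : IsAbsExt Fq v) (P : Polynomial (Polynomial Fq))
    (hP : P ≠ 0) : 1 ≤ Hpoly Fq P :=
  (one_le_v Fq hv (leadingCoeff_ne_zero.2 hP)).trans (coeff_le_Hpoly Fq hv P _)

end Specific

theorem stmt8 (Fq : Type) [Field Fq] [Fintype Fq]
    (v : L Fq → ℝ) (hv : IsAbsExt Fq v)
    (α β : L Fq) (hα : IsAlgElem Fq α) (hβ : IsAlgElem Fq β) (hne : α ≠ β) :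
    max 1 (v α) * max 1 (v β) *
      heightAlg Fq α ^ (-(degAlg Fq β : ℝ) / ((insepAlg Fq α : ℝ) * (insepAlg Fq β : ℝ))) *
      heightAlg Fq β ^ (-(degAlg Fq α : ℝ) / ((insepAlg Fq α : ℝ) * (insepAlg Fq β : ℝ))) ≤
      v (α - β) := by
  have hp : (ringChar Fq).Prime := CharP.char_is_prime Fq _
  haveI : Fact (ringChar Fq).Prime := ⟨hp⟩
  have hP := minPoly_spec Fq hα
  have hQ := minPoly_spec Fq hβ
  unfold heightAlg degAlg insepAlg
  set P := minPolyPrim Fq α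
  set Q := minPolyPrim Fq β
  have hP0 : P ≠ 0 := hP.2.1.ne_zero
  have hQ0 : Q ≠ 0 := hQ.2.1.ne_zero
  obtain ⟨i, R, hfi, hR, hRd⟩ := exists_insep Fq P hP.1
  obtain ⟨j, S, hgj, hS, hSd⟩ := exists_insep Fq Q hQ.1
  have hf0 : 0 < ringChar Fq ^ i := pow_pos hp.pos _
  have hg0 : 0 < ringChar Fq ^ j := pow_pos hp.pos _
  have hPα : (P.map (φ Fq)).eval α = 0 := by rw [eval_map]; exact hP.2.2.2.2
  have hQβ : (Q.map (φ Fq)).eval β = 0 := by rw [eval_map]; exact hQ.2.2.2.2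
  have hHP := one_le_Hpoly Fq hv P hP0
  have hHQ := one_le_Hpoly Fq hv Q hQ0
  set w := absOf Fq hv with hw
  have hna : IsNonarchimedean w := hv.add_le
  have hinj := φ_injective Fq
  have hwφ : ∀ a : Polynomial Fq, φ Fq a ≠ 0 → 1 ≤ w (φ Fq a) := by
    intro a ha
    refine one_le_v Fq hv ?_
    rintro rfl
    simp at ha
  rw [hfi, hgj]
  refine final_real _ _ _ _ _ (by linarith) (by linarith) (max_pos' w α) (max_pos' w β)
    (hv.nonneg _) _ _ _ _ hf0 hg0 ?_
  change 1 ≤ _ * _ * rho w α β ^ _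
  have hρ := rho_nonneg w α β
  by_cases hPQ : P = Q
  · have hij : insepDeg Fq P = insepDeg Fq Q := by rw [hPQ]
    rw [← hPQ] at hQβ ⊢
    rw [← hgj, ← hij, hfi]
    have hRi : Irreducible R := of_irreducible_expand hf0.ne' (hR ▸ hP.2.1)
    have hdeg : P.natDegree = R.natDegree * ringChar Fq ^ i := by
      conv_lhs => rw [hR]
      rw [natDegree_expand]
    have hR0 : 0 < R.natDegree := by
      have := hP.1
      rw [hdeg] at this
      exact Nat.pos_of_mul_pos_right this
    have hRp : R.IsPrimitive := hRi.isPrimitive hR0.ne'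
    have hRi' := (hRp.irreducible_iff_irreducible_map_fraction_map
      (K := FractionRing (Polynomial Fq))).1 hRi
    have hsep : (R.map (algebraMap _ (FractionRing (Polynomial Fq)))).Separable := by
      rw [separable_iff_derivative_ne_zero hRi', derivative_map]
      rw [Ne, Polynomial.map_eq_zero_iff (IsFractionRing.injective _ _)]
      exact hRd
    set A := R.map (φ Fq) with hAdef
    have hA0 : A ≠ 0 := (Polynomial.map_ne_zero_iff hinj).2 hRi.ne_zero
    have hAd : A.natDegree = R.natDegree := natDegree_map_eq_of_injective hinj R
    have hdA : derivative A = (derivative R).map (φ Fq) := derivative_map _ _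
    rw [hR, eval_expand_map] at hPα hQβ
    have hsub : α ^ ringChar Fq ^ i - β ^ ringChar Fq ^ i = (α - β) ^ ringChar Fq ^ i :=
      (sub_pow_char_pow ..).symm
    have hres := resultant_ne Fq A (derivative A) hA0 (A.natDegree - 1)
      (natDegree_derivative_le A) (by
        intro x h1 h2
        refine no_common Fq hsep x (by rwa [map_ψ]) ?_
        rw [derivative_map, map_ψ, ← hdA]
        exact h2)
    have hb := case_two w hna A (IsAlgClosed.splits A) hA0 (α ^ ringChar Fq ^ i)
      (β ^ ringChar Fq ^ i) (by
        rw [← sub_ne_zero, hsub]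
        exact pow_ne_zero _ (sub_ne_zero.2 hne)) hPα hQβ
    have hmax : ∀ x : L Fq, max 1 (w (x ^ ringChar Fq ^ i)) = max 1 (w x) ^ ringChar Fq ^ i := by
      intro x
      rw [map_pow]
      rcases le_total 1 (w x) with h | h
      · rw [max_eq_right h, max_eq_right (one_le_pow₀ h)]
      · rw [max_eq_left h, max_eq_left (pow_le_one₀ (w.nonneg x) h), one_pow]
    have hrho : rho w (α ^ ringChar Fq ^ i) (β ^ ringChar Fq ^ i) =
        rho w α β ^ ringChar Fq ^ i := by
      rw [rho, rho, hsub, hmax, hmax, map_pow, div_pow, mul_pow]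
    rw [hrho] at hb
    have h1 : 1 ≤ w (resultant A (derivative A) A.natDegree (A.natDegree - 1)) := by
      rw [hAd] at hres ⊢
      rw [hdA, hAdef, resultant_map_map] at hres ⊢
      exact hwφ _ hres
    have hG : A.gaussNorm w 1 ≤ Hpoly Fq P := by
      have := gauss_le_Hpoly Fq hv R _ hf0
      rwa [← hR] at this
    have hG0 := gaussNorm_nonneg w A zero_le_one
    have h2 : 1 ≤ Hpoly Fq P ^ R.natDegree * Hpoly Fq P ^ R.natDegree *
        rho w α β ^ ringChar Fq ^ i := by
      refine (h1.trans hb).trans ?_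
      rw [hAd]
      have : A.gaussNorm w 1 ^ (R.natDegree - 1) ≤ Hpoly Fq P ^ R.natDegree :=
        (pow_le_pow_left₀ hG0 hG _).trans (pow_le_pow_right₀ hHP (by omega))
      have hH0 : 0 ≤ Hpoly Fq P := by linarith
      gcongr
    have h3 := one_le_pow₀ (n := ringChar Fq ^ i) h2
    rw [hdeg]
    rwa [mul_pow, mul_pow, ← pow_mul, ← pow_mul] at h3
  · set A := P.map (φ Fq) with hAdef
    set B := Q.map (φ Fq) with hBdef
    have hA0 : A ≠ 0 := (Polynomial.map_ne_zero_iff hinj).2 hP0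
    have hB0 : B ≠ 0 := (Polynomial.map_ne_zero_iff hinj).2 hQ0
    have hAd : A.natDegree = P.natDegree := natDegree_map_eq_of_injective hinj P
    have hBd : B.natDegree = Q.natDegree := natDegree_map_eq_of_injective hinj Q
    have hres := resultant_ne Fq A B hA0 B.natDegree le_rfl
      (fun x h1 h2 => hPQ (eq_of_common_root Fq hP hQ h1 h2))
    have hb := case_one w hna A B (IsAlgClosed.splits A) hA0 hB0 α β
      (ringChar Fq ^ i) (ringChar Fq ^ j)
      (by
        have := pow_dvd_of_expand Fq R i α (by rw [← eval_expand_map, ← hR]; exact hPα)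
        rwa [← hR] at this)
      (by
        have := pow_dvd_of_expand Fq S j β (by rw [← eval_expand_map, ← hS]; exact hQβ)
        rwa [← hS] at this)
    have h1 : 1 ≤ w (resultant A B A.natDegree B.natDegree) := by
      rw [hAd, hBd, hAdef, hBdef, resultant_map_map] at hres ⊢
      exact hwφ _ hres
    have hGA : A.gaussNorm w 1 ≤ Hpoly Fq P := by
      simpa using gauss_le_Hpoly Fq hv P 1 one_pos
    have hGB : B.gaussNorm w 1 ≤ Hpoly Fq Q := by
      simpa using gauss_le_Hpoly Fq hv Q 1 one_pos
    have hGA0 := gaussNorm_nonneg w A zero_le_one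
    have hGB0 := gaussNorm_nonneg w B zero_le_one
    refine (h1.trans hb).trans ?_
    rw [hAd, hBd, mul_comm (B.gaussNorm w 1 ^ _)]
    have hH0 : 0 ≤ Hpoly Fq P := by linarith
    have hH0' : 0 ≤ Hpoly Fq Q := by linarith
    gcongr

end Ooto
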